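/- Let n ≥ 1 and let λ be a partition of n with parts λ_1, …, λ_ℓ. Then the genus-one one-part double Hurwitz number satisfies N(λ, (n); ℓ + 1) / n! = (ℓ + 1)! · n^{ℓ} · ((∑_{i=1}^{ℓ} λ_i²) − 1) / (24 · |Aut(λ)|). Equivalently, the number of tuples (α, τ_1, …, τ_{ℓ+1}), with α a permutation of {1, …, n} of cycle type λ and each τ_i a transposition such that τ_{ℓ+1} ⋯ τ_1 · α is an n-cycle, equals n! · (ℓ + 1)! · n^{ℓ} · ((∑_i λ_i²) − 1) / (24 · |Aut(λ)|). -/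

import Mathlib

open Equiv Nat

/-- The one-part partition `(n)` of `n` (for `n ≥ 1`). -/
def onePartPartition (n : ℕ) (hn : 1 ≤ n) : Nat.Partition n :=
  ⟨{n}, fun hi => by simp_all; omega, by simp⟩

/-- `N(λ, ρ; b)`: the number of tuples `(α, τ₁, …, τ_b)` where `α` is a permutation of
`{1, …, n}` with cycle type `λ`, each `τᵢ` is a transposition, and `τ_b ⋯ τ₁ · α` has
cycle type `ρ`. -/
noncomputable def hurwitzN (n b : ℕ) (lam rho : Nat.Partition n) : ℕ :=
  Nat.card {p : Equiv.Perm (Fin n) × (Fin b → Equiv.Perm (Fin n)) //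
    p.1.partition.parts = lam.parts ∧
    (∀ i, (p.2 i).IsSwap) ∧
    ((List.ofFn p.2).reverse.prod * p.1).partition.parts = rho.parts}

/-- `|Aut(λ)| = ∏ₘ (mₘ(λ))!`, the product over part sizes of the factorial of the
multiplicity of that part size. -/
def autCard {n : ℕ} (lam : Nat.Partition n) : ℕ :=
  ∏ m ∈ lam.parts.toFinset, (lam.parts.count m)!

/-!
Left multiplication by a transposition `(x y)` joins the cycles through `x` and `y` if they are
distinct and cuts their common cycle in two otherwise. Hence the number `W_b(a)` of ways to reach
an `n`-cycle from `a` by `b` transpositions satisfies a recursion whose right-hand side is a sum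
over pairs `x ≠ y`. It vanishes when `a` has more than `b + 1` cycles. When `a` has `b + 1` cycles
only joins contribute, and `n * W_b(a) = b! * n ^ b * P(a)` by induction, where `P(a)` is the
product of the cycle lengths. When `a` has `b - 1` cycles the joins contribute by induction and the
cuts through the previous formula; both contributions contain the sum of the cubes of the cycle
lengths, and these cancel. Multiplying by the size of a conjugacy class gives the Hurwitz number.
-/

namespace DoubleHurwitz

open Equiv.Perm Finset
open Function (minimalPeriod)

variable {V : Type*}

section CycleThroughPoint

theorem minimalPeriod_pos [Finite V] (a : Perm V) (x : V) : 0 < minimalPeriod a x :=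
  Function.minimalPeriod_pos_of_mem_periodicPts (a.injective.mem_periodicPts x)

theorem sameCycle_iff_exists_iterate [Finite V] {a : Perm V} {x y : V} :
    a.SameCycle x y ↔ ∃ k < minimalPeriod a x, a^[k] x = y := by
  constructor
  · intro h
    obtain ⟨k, rfl⟩ := h.exists_nat_pow_eq
    refine ⟨k % minimalPeriod a x, Nat.mod_lt _ (minimalPeriod_pos a x), ?_⟩
    rw [Function.iterate_mod_minimalPeriod_eq, iterate_eq_pow]
  · rintro ⟨k, -, rfl⟩
    exact ⟨k, by rw [iterate_eq_pow, zpow_natCast]⟩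

theorem minimalPeriod_eq_of_sameCycle [Finite V] {a : Perm V} {x y : V} (h : a.SameCycle x y) :
    minimalPeriod a x = minimalPeriod a y := by
  obtain ⟨k, -, rfl⟩ := sameCycle_iff_exists_iterate.1 h
  exact (Function.minimalPeriod_apply_iterate (a.injective.mem_periodicPts x) k).symm

theorem exists_iterate_eq_cons (f : V → V) (x : V) {k : ℕ} (hk : 0 < k) :
    ∃ l, List.iterate f x k = x :: l := by
  obtain ⟨k, rfl⟩ := Nat.exists_eq_succ_of_ne_zero hk.ne'
  exact ⟨_, rfl⟩

/-- The cycle of `a` through `x`, listed from `x` on; unlike `Equiv.Perm.toList` it is `[x]`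
at a fixed point `x`. -/
noncomputable def orbitList (a : Perm V) (x : V) : List V := List.iterate a x (minimalPeriod a x)

theorem length_orbitList (a : Perm V) (x : V) : (orbitList a x).length = minimalPeriod a x :=
  List.length_iterate ..

theorem nodup_orbitList (a : Perm V) (x : V) : (orbitList a x).Nodup := by
  rw [orbitList, ← List.range_map_iterate]
  exact List.nodup_range.map_on fun j hj k hk => Function.iterate_injOn_Iio_minimalPeriod
    (List.mem_range.1 hj) (List.mem_range.1 hk)

theorem mem_orbitList [Finite V] {a : Perm V} {x y : V} : y ∈ orbitList a x ↔ a.SameCycle x y := by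
  simp only [orbitList, List.mem_iterate, sameCycle_iff_exists_iterate, eq_comm]

theorem formPerm_orbitList_apply [DecidableEq V] {a : Perm V} {x z : V} (hz : z ∈ orbitList a x) :
    (orbitList a x).formPerm z = a z := by
  obtain ⟨k, hk, rfl⟩ := List.getElem_of_mem hz
  rw [List.formPerm_apply_getElem _ (nodup_orbitList a x)]
  simp only [orbitList, List.getElem_iterate, List.length_iterate,
    Function.iterate_mod_minimalPeriod_eq, Function.iterate_succ_apply']

variable [Fintype V] [DecidableEq V]

theorem sum_sameCycle {M : Type*} [AddCommMonoid M] (a : Perm V) (x : V) (f : V → M) :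
    ∑ y with a.SameCycle x y, f y = ∑ k ∈ range (minimalPeriod a x), f (a^[k] x) := by
  refine (sum_nbij (a^[·] x) ?_ ?_ ?_ fun _ _ => rfl).symm
  · intro k hk
    exact mem_filter.2 ⟨mem_univ _,
      sameCycle_iff_exists_iterate.2 ⟨k, mem_range.1 hk, rfl⟩⟩
  · simpa only [coe_range] using Function.iterate_injOn_Iio_minimalPeriod (f := a) (x := x)
  · intro y hy
    obtain ⟨k, hk, rfl⟩ := sameCycle_iff_exists_iterate.1 (mem_filter.1 hy).2
    exact ⟨k, mem_coe.2 (mem_range.2 hk), rfl⟩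

theorem card_sameCycle (a : Perm V) (x : V) : #{y | a.SameCycle x y} = minimalPeriod a x := by
  rw [card_eq_sum_ones, sum_sameCycle, ← card_eq_sum_ones, card_range]

theorem minimalPeriod_eq_card_support {a c : Perm V} (hc : c ∈ a.cycleFactorsFinset) {x : V}
    (hx : x ∈ c.support) : minimalPeriod a x = #c.support := by
  rw [← card_sameCycle, (eq_cycleOf_of_mem_cycleFactorsFinset_iff a c hc x).2 hx]
  congr 1
  ext y
  simp only [mem_filter, mem_univ, true_and, mem_support_cycleOf_iff,
    mem_cycleFactorsFinset_support_le hc hx, and_true]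

theorem sum_support_apply_minimalPeriod {M : Type*} [AddCommMonoid M] (a : Perm V) (f : ℕ → M) :
    ∑ x ∈ a.support, f (minimalPeriod a x) = (a.cycleType.map fun m => m • f m).sum := by
  have cycleOf_mem : ∀ x ∈ a.support, a.cycleOf x ∈ a.cycleFactorsFinset := fun x hx =>
    cycleOf_mem_cycleFactorsFinset_iff.2 hx
  rw [← sum_fiberwise_of_maps_to cycleOf_mem, cycleType_def, Multiset.map_map]
  refine sum_congr rfl fun c hc => ?_
  have fiber_eq : {x ∈ a.support | a.cycleOf x = c} = c.support := by
    ext x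
    rw [mem_filter, eq_comm, eq_cycleOf_of_mem_cycleFactorsFinset_iff a c hc x]
    exact and_iff_right_of_imp fun hx => mem_cycleFactorsFinset_support_le hc hx
  rw [fiber_eq, sum_congr rfl fun x hx => by rw [minimalPeriod_eq_card_support hc hx], sum_const]
  rfl

theorem sum_apply_minimalPeriod {M : Type*} [AddCommMonoid M] (a : Perm V) (f : ℕ → M) :
    ∑ x, f (minimalPeriod a x) = (a.partition.parts.map fun m => m • f m).sum := by
  have fixed : ∀ x ∈ a.supportᶜ, f (minimalPeriod a x) = f 1 := fun x hx => by
    rw [Function.minimalPeriod_eq_one_iff_isFixedPt.2 (by simpa [Function.IsFixedPt] using hx)]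
  rw [← sum_add_sum_compl a.support, sum_support_apply_minimalPeriod, sum_congr rfl fixed,
    sum_const, card_compl, parts_partition, Multiset.map_add, Multiset.sum_add,
    Multiset.map_replicate, Multiset.sum_replicate, one_smul]

end CycleThroughPoint

section CutAndJoin

variable [DecidableEq V]

theorem swap_mul_formPerm_append {x y : V} {l₁ l₂ : List V} (h : (x :: l₁ ++ y :: l₂).Nodup) :
    swap x y * (x :: l₁ ++ y :: l₂).formPerm = (x :: l₁).formPerm * (y :: l₂).formPerm := by
  induction l₁ generalizing x with
  | nil => simp
  | cons z l₁ ih =>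
    have hyx : y ≠ x := by grind
    have hyz : y ≠ z := by grind
    have conj : swap x y * swap x z = swap x z * swap z y := by
      rw [mul_swap_eq_swap_mul (swap x z), swap_apply_right, swap_apply_of_ne_of_ne hyx hyz]
    have ih := ih h.of_cons
    simp only [List.cons_append, List.formPerm_cons_cons] at ih ⊢
    rw [← mul_assoc, conj, mul_assoc, ih, mul_assoc]

variable [Fintype V]

theorem exists_parts_eq_replicate_one_add {R : Perm V} {s : Finset V} (hR : ∀ z ∈ s, R z = z) :
    ∃ M, R.partition.parts = Multiset.replicate #s 1 + M := by
  have card_le : #s ≤ Fintype.card V - #R.support := by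
    rw [← card_compl]
    exact card_le_card fun z hz => by simpa using hR z hz
  refine ⟨R.cycleType + Multiset.replicate (Fintype.card V - #R.support - #s) 1, ?_⟩
  rw [parts_partition, add_left_comm, ← Multiset.replicate_add, Nat.add_sub_cancel' card_le]

theorem parts_formPerm_mul {l : List V} (hl : l.Nodup) (hne : l ≠ []) {R : Perm V}
    (hR : ∀ z ∈ l, R z = z) {M : Multiset ℕ}
    (hM : R.partition.parts = Multiset.replicate l.length 1 + M) :
    (l.formPerm * R).partition.parts = l.length ::ₘ M := by
  rcases (Nat.one_le_iff_ne_zero.2 (List.length_eq_zero_iff.not.2 hne)).eq_or_lt with hlen | hlen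
  · obtain ⟨z, rfl⟩ := List.length_eq_one_iff.1 hlen.symm
    simpa using hM
  have support_eq : l.formPerm.support = l.toFinset :=
    List.support_formPerm_of_nodup l hl fun z hz => by simp [hz] at hlen
  have card_support : #l.formPerm.support = l.length := by
    rw [support_eq, List.toFinset_card_of_nodup hl]
  have hdisj : l.formPerm.Disjoint R := fun z =>
    (em (z ∈ l)).symm.imp List.formPerm_apply_of_notMem (hR z)
  have card_fixed : Fintype.card V - #R.support =
      l.length + (Fintype.card V - #(l.formPerm * R).support) := by
    have := card_le_univ (l.formPerm * R).support
    have := hdisj.card_support_mul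
    omega
  have hM' :
      R.cycleType + Multiset.replicate (Fintype.card V - #(l.formPerm * R).support) 1 = M := by
    rw [parts_partition, card_fixed, Multiset.replicate_add, add_left_comm] at hM
    exact add_left_cancel hM
  rw [parts_partition, hdisj.cycleType_mul, (List.isCycle_formPerm hl hlen).cycleType,
    card_support, add_assoc, hM', Multiset.singleton_add]

theorem exists_parts_swap_mul {x y : V} {l₁ l₂ : List V} {a : Perm V}
    (hl : (x :: l₁ ++ y :: l₂).Nodup)
    (ha : ∀ z ∈ x :: l₁ ++ y :: l₂, (x :: l₁ ++ y :: l₂).formPerm z = a z) :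
    ∃ M, a.partition.parts = ((x :: l₁).length + (y :: l₂).length) ::ₘ M ∧
      (swap x y * a).partition.parts = (x :: l₁).length ::ₘ (y :: l₂).length ::ₘ M := by
  set R := (x :: l₁ ++ y :: l₂).formPerm⁻¹ * a with hR_def
  have hR : ∀ z ∈ x :: l₁ ++ y :: l₂, R z = z := fun z hz => by
    rw [hR_def, Perm.mul_apply, inv_eq_iff_eq, ha z hz]
  have a_eq : a = (x :: l₁ ++ y :: l₂).formPerm * R := (mul_inv_cancel_left _ a).symm
  have swap_mul_eq : swap x y * a = (x :: l₁).formPerm * ((y :: l₂).formPerm * R) := by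
    rw [a_eq, ← mul_assoc, swap_mul_formPerm_append hl, mul_assoc]
  obtain ⟨M, hM⟩ := exists_parts_eq_replicate_one_add (R := R) (s := (x :: l₁ ++ y :: l₂).toFinset)
    fun z hz => hR z (List.mem_toFinset.1 hz)
  rw [List.toFinset_card_of_nodup hl] at hM
  obtain ⟨hl₁, hl₂, hdisj⟩ := List.nodup_append'.1 hl
  have hM₂ : ((y :: l₂).formPerm * R).partition.parts =
      Multiset.replicate (x :: l₁).length 1 + (y :: l₂).length ::ₘ M := by
    rw [Multiset.add_cons]
    refine parts_formPerm_mul hl₂ (List.cons_ne_nil _ _)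
      (fun z hz => hR z (List.mem_append_right _ hz)) ?_
    rw [hM, List.length_append, Nat.add_comm, Multiset.replicate_add, add_assoc]
  refine ⟨M, ?_, ?_⟩
  · rw [← List.length_append, a_eq]
    exact parts_formPerm_mul hl (List.append_ne_nil_of_left_ne_nil (List.cons_ne_nil _ _) _) hR hM
  · rw [swap_mul_eq]
    refine parts_formPerm_mul hl₁ (List.cons_ne_nil _ _) (fun z hz => ?_) hM₂
    rw [Perm.mul_apply, hR z (List.mem_append_left _ hz)]
    exact List.formPerm_apply_of_notMem (hdisj hz)

theorem exists_parts_cut {a : Perm V} {x : V} {j k : ℕ} (hj : 0 < j) (hk : 0 < k)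
    (h : minimalPeriod a x = j + k) :
    ∃ M, a.partition.parts = (j + k) ::ₘ M ∧
      (swap x (a^[j] x) * a).partition.parts = j ::ₘ k ::ₘ M := by
  obtain ⟨l₁, hl₁⟩ := exists_iterate_eq_cons a x hj
  obtain ⟨l₂, hl₂⟩ := exists_iterate_eq_cons a (a^[j] x) hk
  have hl : orbitList a x = x :: l₁ ++ a^[j] x :: l₂ := by
    rw [orbitList, h, List.iterate_add, hl₁, hl₂]
  have := exists_parts_swap_mul (a := a) (hl ▸ nodup_orbitList a x) <|
    hl ▸ fun _ => formPerm_orbitList_apply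
  rwa [← hl₁, ← hl₂, List.length_iterate, List.length_iterate] at this

theorem exists_parts_join {a : Perm V} {x y : V} (h : ¬ a.SameCycle x y) :
    ∃ M, a.partition.parts = minimalPeriod a x ::ₘ minimalPeriod a y ::ₘ M ∧
      (swap x y * a).partition.parts = (minimalPeriod a x + minimalPeriod a y) ::ₘ M := by
  obtain ⟨l₁, hl₁ : orbitList a x = _⟩ := exists_iterate_eq_cons a x (minimalPeriod_pos a x)
  obtain ⟨l₂, hl₂ : orbitList a y = _⟩ := exists_iterate_eq_cons a y (minimalPeriod_pos a y)
  have hdisj : (orbitList a x).Disjoint (orbitList a y) := fun z hx hy =>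
    h ((mem_orbitList.1 hx).trans (mem_orbitList.1 hy).symm)
  have hnd : (orbitList a x ++ orbitList a y).Nodup :=
    List.nodup_append'.2 ⟨nodup_orbitList a x, nodup_orbitList a y, hdisj⟩
  have formPerm_mul_apply : ∀ z ∈ orbitList a x ++ orbitList a y,
      (orbitList a x).formPerm ((orbitList a y).formPerm z) = a z := fun z hz => by
    rcases List.mem_append.1 hz with hzx | hzy
    · rw [List.formPerm_apply_of_notMem (hdisj hzx), formPerm_orbitList_apply hzx]
    · have : a z ∈ orbitList a y := mem_orbitList.2 (sameCycle_apply_right.2 (mem_orbitList.1 hzy))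
      rw [formPerm_orbitList_apply hzy, List.formPerm_apply_of_notMem fun hx => hdisj hx this]
  have formPerm_append_apply : ∀ z ∈ orbitList a x ++ orbitList a y,
      (orbitList a x ++ orbitList a y).formPerm z = (swap x y * a) z := fun z hz => by
    rw [Perm.mul_apply, ← formPerm_mul_apply z hz, ← Perm.mul_apply, ← Perm.mul_apply]
    rw [hl₁, hl₂] at hnd ⊢
    rw [mul_assoc, ← swap_mul_formPerm_append hnd, swap_mul_self_mul]
  rw [hl₁, hl₂] at hnd formPerm_append_apply
  obtain ⟨M, hjoin, hsplit⟩ := exists_parts_swap_mul hnd formPerm_append_apply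
  rw [← hl₁, ← hl₂, length_orbitList, length_orbitList] at hjoin hsplit
  rw [swap_mul_self_mul] at hsplit
  exact ⟨M, hsplit, hjoin⟩

end CutAndJoin

section CycleStatistics

variable [Fintype V] [DecidableEq V]

/-- The number of cycles of `a`, fixed points included. -/
def cycleCount (a : Perm V) : ℕ := Multiset.card a.partition.parts

/-- The product of the cycle lengths of `a`. -/
def cycleProd (a : Perm V) : ℕ := a.partition.parts.prod

/-- The sum of the squares of the cycle lengths of `a`. -/
def cycleSqSum (a : Perm V) : ℕ := (a.partition.parts.map fun m => m ^ 2).sum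

theorem cycleCount_join {a : Perm V} {x y : V} (h : ¬ a.SameCycle x y) :
    cycleCount (swap x y * a) + 1 = cycleCount a := by
  obtain ⟨M, ha, hswap⟩ := exists_parts_join h
  simp only [cycleCount, ha, hswap, Multiset.card_cons]

theorem cycleCount_cut {a : Perm V} {x y : V} (h : a.SameCycle x y) (hxy : x ≠ y) :
    cycleCount (swap x y * a) = cycleCount a + 1 := by
  obtain ⟨j, hj, rfl⟩ := sameCycle_iff_exists_iterate.1 h
  have hj₀ : 0 < j := Nat.pos_of_ne_zero fun hj₀ => hxy (by rw [hj₀, Function.iterate_zero_apply])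
  obtain ⟨M, ha, hswap⟩ :=
    exists_parts_cut hj₀ (Nat.sub_pos_of_lt hj) (Nat.add_sub_of_le hj.le).symm
  simp only [cycleCount, ha, hswap, Multiset.card_cons]

theorem cycleProd_join {a : Perm V} {x y : V} (h : ¬ a.SameCycle x y) :
    (cycleProd (swap x y * a) : ℚ) =
      cycleProd a * ((minimalPeriod a x : ℚ)⁻¹ + (minimalPeriod a y : ℚ)⁻¹) := by
  obtain ⟨M, ha, hswap⟩ := exists_parts_join h
  have hx := minimalPeriod_pos a x
  have hy := minimalPeriod_pos a y
  simp only [cycleProd, ha, hswap, Multiset.prod_cons]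
  push_cast
  field_simp
  ring

theorem cycleProd_cut {a : Perm V} {x : V} {j : ℕ} (hj : 0 < j) (hja : j < minimalPeriod a x) :
    (cycleProd (swap x (a^[j] x) * a) : ℚ) =
      cycleProd a / minimalPeriod a x * (j * (minimalPeriod a x - j)) := by
  obtain ⟨k, hk⟩ := Nat.exists_eq_add_of_lt hja
  obtain ⟨M, ha, hswap⟩ := exists_parts_cut hj (Nat.succ_pos k) hk
  simp only [cycleProd, ha, hswap, hk, Multiset.prod_cons]
  push_cast
  field_simp
  ring

theorem cycleSqSum_join {a : Perm V} {x y : V} (h : ¬ a.SameCycle x y) :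
    cycleSqSum (swap x y * a) = cycleSqSum a + 2 * (minimalPeriod a x * minimalPeriod a y) := by
  obtain ⟨M, ha, hswap⟩ := exists_parts_join h
  simp only [cycleSqSum, ha, hswap, Multiset.map_cons, Multiset.sum_cons]
  ring

theorem sum_minimalPeriod (a : Perm V) : ∑ x, minimalPeriod a x = cycleSqSum a := by
  rw [sum_apply_minimalPeriod a fun m => m, cycleSqSum]
  simp only [sq, smul_eq_mul]

theorem sum_inv_minimalPeriod (a : Perm V) : ∑ x, (minimalPeriod a x : ℚ)⁻¹ = cycleCount a := by
  have mul_inv_parts : ∀ m ∈ a.partition.parts, m • (m : ℚ)⁻¹ = 1 := fun m hm => by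
    rw [nsmul_eq_mul, mul_inv_cancel₀ (Nat.cast_ne_zero.2 (a.partition.parts_pos hm).ne')]
  rw [sum_apply_minimalPeriod a fun m => (m : ℚ)⁻¹, Multiset.map_congr rfl mul_inv_parts,
    Multiset.map_const', Multiset.sum_replicate, nsmul_one, cycleCount]

end CycleStatistics

section TranspositionSums

variable [Fintype V] [DecidableEq V]

theorem sum_range_mul_sub (n : ℕ) :
    ∑ k ∈ range n, (k : ℚ) * (n - k) = n * (n ^ 2 - 1) / 6 := by
  have partial_sum : ∀ m : ℕ, ∑ k ∈ range m, (k : ℚ) * (n - k) =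
      m * (m - 1) * (3 * n - 2 * m + 1) / 6 := fun m => by
    induction m with
    | zero => simp
    | succ m ih => rw [sum_range_succ, ih]; push_cast; ring
  rw [partial_sum]
  ring

theorem sum_cut_cycleProd_at (a : Perm V) (x : V) :
    ∑ y with a.SameCycle x y ∧ x ≠ y, (cycleProd (swap x y * a) : ℚ) =
      cycleProd a * (((minimalPeriod a x : ℚ) ^ 2 - 1) / 6) := by
  have cut_at : ∀ k ∈ range (minimalPeriod a x),
      (if x ≠ a^[k] x then (cycleProd (swap x (a^[k] x) * a) : ℚ) else 0) =
        cycleProd a / minimalPeriod a x * (k * (minimalPeriod a x - k)) := fun k hk => by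
    rcases k.eq_zero_or_pos with rfl | hk₀
    · simp
    · rw [if_pos, cycleProd_cut hk₀ (mem_range.1 hk)]
      exact fun hx => Function.not_isPeriodicPt_of_pos_of_lt_minimalPeriod hk₀.ne'
        (mem_range.1 hk) hx.symm
  have hx := minimalPeriod_pos a x
  rw [← filter_filter, sum_filter, sum_sameCycle, sum_congr rfl cut_at, ← mul_sum,
    sum_range_mul_sub]
  field_simp

theorem sum_cut_cycleProd (a : Perm V) :
    ∑ x, ∑ y with a.SameCycle x y ∧ x ≠ y, (cycleProd (swap x y * a) : ℚ) =
      cycleProd a * ((∑ x, (minimalPeriod a x : ℚ) ^ 2 - Fintype.card V) / 6) := by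
  simp only [sum_cut_cycleProd_at, ← mul_sum, ← sum_div, sum_sub_distrib, sum_const,
    Finset.card_univ, nsmul_one]

theorem sum_not_sameCycle_add {R : Type*} [CommRing R] (a : Perm V) (f : ℕ → R) :
    ∑ x, ∑ y with ¬ a.SameCycle x y, (f (minimalPeriod a x) + f (minimalPeriod a y)) =
      2 * (Fintype.card V * ∑ x, f (minimalPeriod a x) -
        ∑ x, minimalPeriod a x * f (minimalPeriod a x)) := by
  have sum_same : ∀ x, ∑ y with a.SameCycle x y, (f (minimalPeriod a x) + f (minimalPeriod a y)) =
      2 * (minimalPeriod a x * f (minimalPeriod a x)) := fun x => by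
    rw [sum_congr rfl fun y hy => by rw [← minimalPeriod_eq_of_sameCycle (mem_filter.1 hy).2],
      sum_const, card_sameCycle, nsmul_eq_mul]
    ring
  have sum_not_same : ∀ x,
      ∑ y with ¬ a.SameCycle x y, (f (minimalPeriod a x) + f (minimalPeriod a y)) =
        Fintype.card V * f (minimalPeriod a x) + ∑ y, f (minimalPeriod a y) -
          2 * (minimalPeriod a x * f (minimalPeriod a x)) := fun x => by
    rw [← sum_same x, eq_sub_iff_add_eq', sum_filter_add_sum_filter_not, sum_add_distrib,
      sum_const, Finset.card_univ, nsmul_eq_mul]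
  simp only [sum_not_same, sum_sub_distrib, sum_add_distrib, ← mul_sum, sum_const, Finset.card_univ,
    nsmul_eq_mul]
  ring

theorem sum_join_cycleProd (a : Perm V) :
    ∑ x, ∑ y with ¬ a.SameCycle x y, (cycleProd (swap x y * a) : ℚ) =
      cycleProd a * (2 * Fintype.card V * (cycleCount a - 1)) := by
  have mul_inv : ∀ x, (minimalPeriod a x : ℚ) * (minimalPeriod a x : ℚ)⁻¹ = 1 := fun x =>
    mul_inv_cancel₀ (Nat.cast_ne_zero.2 (minimalPeriod_pos a x).ne')
  have hsum := sum_not_sameCycle_add a fun m => (m : ℚ)⁻¹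
  simp only [mul_inv, sum_inv_minimalPeriod, sum_const, Finset.card_univ, nsmul_one] at hsum
  rw [sum_congr rfl fun x _ => sum_congr rfl fun y hy => cycleProd_join (mem_filter.1 hy).2]
  simp only [← mul_sum, hsum]
  ring

theorem sum_join_cycleProd_mul_cycleSqSum (a : Perm V) :
    ∑ x, ∑ y with ¬ a.SameCycle x y,
        (cycleProd (swap x y * a) : ℚ) * cycleSqSum (swap x y * a) =
      cycleProd a * (2 * Fintype.card V * (cycleCount a - 1) * cycleSqSum a +
        4 * (Fintype.card V * cycleSqSum a - ∑ x, (minimalPeriod a x : ℚ) ^ 2)) := by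
  have join_at : ∀ x, ∀ y ∈ ({y | ¬ a.SameCycle x y} : Finset V),
      (cycleProd (swap x y * a) : ℚ) * cycleSqSum (swap x y * a) =
        cycleSqSum a * cycleProd (swap x y * a) +
          2 * cycleProd a * ((minimalPeriod a x : ℚ) + minimalPeriod a y) := fun x y hy => by
    have hx := minimalPeriod_pos a x
    have hy₀ := minimalPeriod_pos a y
    rw [cycleSqSum_join (mem_filter.1 hy).2, cycleProd_join (mem_filter.1 hy).2]
    push_cast
    field_simp
    ring
  rw [sum_congr rfl fun x _ => sum_congr rfl (join_at x)]
  simp only [sum_add_distrib, ← mul_sum, sum_join_cycleProd]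
  have hsum := sum_not_sameCycle_add a fun m => (m : ℚ)
  simp only [← sq] at hsum
  simp only [← sum_add_distrib, hsum, ← sum_minimalPeriod, Nat.cast_sum]
  ring

end TranspositionSums

section Walks

variable [Fintype V] [DecidableEq V]

theorem card_filter_swap_eq {t : Perm V} (ht : t.IsSwap) :
    #{p : V × V | p.1 ≠ p.2 ∧ swap p.1 p.2 = t} = 2 := by
  rw [← card_support_eq_two.2 ht]
  refine card_nbij' Prod.fst (fun x => (x, t x)) ?_ ?_ ?_ fun _ _ => rfl
  · rintro ⟨x, y⟩ hp
    obtain ⟨hxy, rfl⟩ := (mem_filter.1 hp).2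
    simpa using hxy.symm
  · intro x hx
    obtain ⟨y, z, -, rfl⟩ := ht
    have hx := mem_support.1 hx
    refine mem_filter.2 ⟨mem_univ _, hx.symm, ?_⟩
    rcases eq_or_eq_of_swap_apply_ne_self hx with rfl | rfl
    · simp only [swap_apply_left]
    · exact (congrArg (swap x) (swap_apply_right y x)).trans (swap_comm x y)
  · rintro ⟨x, y⟩ hp
    obtain ⟨-, rfl⟩ := (mem_filter.1 hp).2
    simp only [swap_apply_left]

open scoped Classical in
theorem two_nsmul_sum_isSwap {M : Type*} [AddCommMonoid M] (f : Perm V → M) :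
    2 • ∑ t with t.IsSwap, f t = ∑ x, ∑ y with x ≠ y, f (swap x y) := by
  have isSwap_of_ne : ∀ p ∈ ({p | p.1 ≠ p.2} : Finset (V × V)),
      swap p.1 p.2 ∈ ({t | t.IsSwap} : Finset (Perm V)) := fun p hp =>
    mem_filter.2 ⟨mem_univ _, p.1, p.2, (mem_filter.1 hp).2, rfl⟩
  calc 2 • ∑ t with t.IsSwap, f t
      = ∑ t with t.IsSwap, ∑ p : V × V with p.1 ≠ p.2 ∧ swap p.1 p.2 = t, f t := by
        rw [smul_sum]
        refine sum_congr rfl fun t ht => ?_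
        rw [sum_const, card_filter_swap_eq (mem_filter.1 ht).2]
    _ = ∑ p : V × V with p.1 ≠ p.2, f (swap p.1 p.2) := by
        simp only [← filter_filter, sum_fiberwise_of_maps_to' isSwap_of_ne f]
    _ = ∑ x, ∑ y with x ≠ y, f (swap x y) := by
        simp only [sum_filter, Fintype.sum_prod_type]

open scoped Classical in
theorem two_nsmul_sum_isSwap_mul {M : Type*} [AddCommMonoid M] (f : Perm V → M) (a : Perm V) :
    2 • ∑ t with t.IsSwap, f (t * a) =
      ∑ x, ∑ y with ¬ a.SameCycle x y, f (swap x y * a) +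
        ∑ x, ∑ y with a.SameCycle x y ∧ x ≠ y, f (swap x y * a) := by
  have join_pairs : ∀ x y, (x ≠ y ∧ ¬ a.SameCycle x y) ↔ ¬ a.SameCycle x y := fun x y =>
    and_iff_right_of_imp fun h hxy => h (hxy ▸ SameCycle.refl a x)
  rw [two_nsmul_sum_isSwap fun t => f (t * a), ← sum_add_distrib]
  refine sum_congr rfl fun x _ => ?_
  rw [← sum_filter_add_sum_filter_not _ fun y => a.SameCycle x y, filter_filter, filter_filter,
    add_comm]
  simp only [join_pairs, and_comm]

/-- The number of sequences of `b` transpositions `t` such that `t_{b-1} ⋯ t_0 * a` is a full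
cycle, that is, has the one-part cycle type. -/
noncomputable def walkCount (b : ℕ) (a : Perm V) : ℕ :=
  Nat.card {t : Fin b → Perm V //
    (∀ i, (t i).IsSwap) ∧
    ((List.ofFn t).reverse.prod * a).partition.parts = {Fintype.card V}}

open scoped Classical in
theorem walkCount_eq_sum (b : ℕ) (a : Perm V) :
    walkCount b a = ∑ t : Fin b → Perm V, if (∀ i, (t i).IsSwap) ∧
      ((List.ofFn t).reverse.prod * a).partition.parts = {Fintype.card V} then 1 else 0 := by
  rw [walkCount, Nat.card_eq_fintype_card, Fintype.card_subtype, card_filter]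

theorem walkCount_zero (a : Perm V) :
    walkCount 0 a = if cycleCount a = 1 then 1 else 0 := by
  classical
  have parts_eq_iff : a.partition.parts = {Fintype.card V} ↔ cycleCount a = 1 := by
    refine ⟨fun h => by rw [cycleCount, h, Multiset.card_singleton], fun h => ?_⟩
    obtain ⟨m, hm⟩ := Multiset.card_eq_one.1 h
    rw [hm, Multiset.singleton_inj, ← Multiset.sum_singleton m, ← hm, a.partition.parts_sum]
  simp [walkCount_eq_sum, parts_eq_iff]

open scoped Classical in
theorem walkCount_succ (b : ℕ) (a : Perm V) :
    walkCount (b + 1) a = ∑ t with t.IsSwap, walkCount b (t * a) := by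
  rw [walkCount_eq_sum, ← (Fin.consEquiv fun _ => Perm V).sum_comp, Fintype.sum_prod_type,
    sum_filter]
  refine sum_congr rfl fun t _ => ?_
  simp only [walkCount_eq_sum, Fin.consEquiv_apply, Fin.forall_fin_succ, Fin.cons_zero,
    Fin.cons_succ, List.ofFn_succ, List.reverse_cons, List.prod_append, List.prod_singleton,
    mul_assoc]
  split_ifs with ht <;> simp [ht]

theorem two_mul_walkCount_succ (b : ℕ) (a : Perm V) :
    2 * (walkCount (b + 1) a : ℚ) =
      ∑ x, ∑ y with ¬ a.SameCycle x y, (walkCount b (swap x y * a) : ℚ) +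
        ∑ x, ∑ y with a.SameCycle x y ∧ x ≠ y, (walkCount b (swap x y * a) : ℚ) := by
  classical
  rw [← two_nsmul_sum_isSwap_mul fun c => (walkCount b c : ℚ), walkCount_succ, nsmul_eq_mul]
  push_cast
  rfl

theorem cycleCount_le_swap_mul_add_one (a : Perm V) {x y : V} (hxy : x ≠ y) :
    cycleCount a ≤ cycleCount (swap x y * a) + 1 := by
  by_cases h : a.SameCycle x y
  · have := cycleCount_cut h hxy
    lia
  · exact (cycleCount_join h).ge

theorem walkCount_eq_zero {b : ℕ} {a : Perm V} (h : b + 1 < cycleCount a) :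
    walkCount b a = 0 := by
  classical
  induction b generalizing a with
  | zero => rw [walkCount_zero, if_neg (by lia)]
  | succ b ih =>
    rw [walkCount_succ]
    refine sum_eq_zero fun t ht => ?_
    obtain ⟨x, y, hxy, rfl⟩ := (mem_filter.1 ht).2
    have := cycleCount_le_swap_mul_add_one a hxy
    exact ih (by lia)

theorem card_mul_walkCount_of_cycleCount_eq_add_one {b : ℕ} {a : Perm V}
    (h : cycleCount a = b + 1) :
    (Fintype.card V * walkCount b a : ℚ) = b ! * Fintype.card V ^ b * cycleProd a := by
  induction b generalizing a with
  | zero =>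
    obtain ⟨m, hm⟩ := Multiset.card_eq_one.1 h
    have := a.partition.parts_sum
    simp [walkCount_zero, h, cycleProd, ← this, hm]
  | succ b ih =>
    have join : ∀ x, ∀ y ∈ ({y | ¬ a.SameCycle x y} : Finset V),
        (Fintype.card V * walkCount b (swap x y * a) : ℚ) =
          b ! * Fintype.card V ^ b * cycleProd (swap x y * a) := fun x y hy => by
      have := cycleCount_join (mem_filter.1 hy).2
      exact ih (by lia)
    have cut : ∀ x, ∀ y ∈ ({y | a.SameCycle x y ∧ x ≠ y} : Finset V),
        (walkCount b (swap x y * a) : ℚ) = 0 := fun x y hy => by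
      obtain ⟨hxy, hne⟩ := (mem_filter.1 hy).2
      have := cycleCount_cut hxy hne
      rw [walkCount_eq_zero (by lia), Nat.cast_zero]
    refine mul_left_cancel₀ (two_ne_zero (α := ℚ)) ?_
    calc 2 * (Fintype.card V * walkCount (b + 1) a : ℚ)
        = ∑ x, ∑ y with ¬ a.SameCycle x y, (Fintype.card V * walkCount b (swap x y * a) : ℚ) := by
          rw [mul_left_comm, two_mul_walkCount_succ,
            sum_eq_zero fun x _ => sum_eq_zero (cut x), add_zero]
          simp only [mul_sum]
      _ = b ! * Fintype.card V ^ b * (cycleProd a * (2 * Fintype.card V * (b + 1))) := by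
          rw [sum_congr rfl fun x _ => sum_congr rfl (join x)]
          simp only [← mul_sum, sum_join_cycleProd, h]
          push_cast
          ring
      _ = 2 * ((b + 1)! * Fintype.card V ^ (b + 1) * cycleProd a) := by
          rw [Nat.factorial_succ]
          push_cast
          ring

theorem cycleCount_pos [Nonempty V] (a : Perm V) : 0 < cycleCount a := by
  refine Multiset.card_pos.2 fun h => Fintype.card_ne_zero (α := V) ?_
  rw [← a.partition.parts_sum, h, Multiset.sum_zero]

theorem walkCount_cycleCount_add_one [Nonempty V] {m : ℕ} {a : Perm V} (h : cycleCount a = m) :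
    (walkCount (m + 1) a : ℚ) =
      (m + 1)! * Fintype.card V ^ m * cycleProd a * (cycleSqSum a - 1) / 24 := by
  induction m generalizing a with
  | zero => exact absurd h (cycleCount_pos a).ne'
  | succ m ih =>
    set K : ℚ := (m + 1)! * Fintype.card V ^ m with hK
    have join : ∀ x, ∀ y ∈ ({y | ¬ a.SameCycle x y} : Finset V),
        (walkCount (m + 1) (swap x y * a) : ℚ) =
          K / 24 * (cycleProd (swap x y * a) * cycleSqSum (swap x y * a)) -
            K / 24 * cycleProd (swap x y * a) := fun x y hy => by
      have := cycleCount_join (mem_filter.1 hy).2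
      rw [ih (by lia)]
      ring
    have cut : ∀ x, ∀ y ∈ ({y | a.SameCycle x y ∧ x ≠ y} : Finset V),
        (walkCount (m + 1) (swap x y * a) : ℚ) = K * cycleProd (swap x y * a) := fun x y hy => by
      obtain ⟨hxy, hne⟩ := (mem_filter.1 hy).2
      have genus_zero := card_mul_walkCount_of_cycleCount_eq_add_one (b := m + 1)
        ((cycleCount_cut hxy hne).trans (congrArg (· + 1) h))
      refine mul_left_cancel₀ (Nat.cast_ne_zero.2 (Fintype.card_ne_zero (α := V))) ?_
      rw [genus_zero, hK]
      ring
    refine mul_left_cancel₀ (two_ne_zero (α := ℚ)) ?_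
    rw [two_mul_walkCount_succ, sum_congr rfl fun x _ => sum_congr rfl (join x),
      sum_congr rfl fun x _ => sum_congr rfl (cut x)]
    simp only [sum_sub_distrib, ← mul_sum, sum_join_cycleProd, sum_join_cycleProd_mul_cycleSqSum,
      sum_cut_cycleProd, h, hK, Nat.factorial_succ (m + 1)]
    push_cast
    ring

end Walks

section CycleTypeClass

theorem filter_two_le_parts_add_replicate {n : ℕ} (lam : n.Partition) :
    lam.parts.filter (2 ≤ ·) + Multiset.replicate (lam.parts.count 1) 1 = lam.parts := by
  have ones : lam.parts.filter (fun k => ¬ 2 ≤ k) = Multiset.replicate (lam.parts.count 1) 1 := by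
    rw [← Multiset.filter_eq']
    refine Multiset.filter_congr fun k hk => ?_
    have := lam.parts_pos hk
    lia
  rw [← ones, Multiset.filter_add_not]

theorem autCard_eq_factorial_mul_prod {n : ℕ} (lam : n.Partition) :
    autCard lam = (lam.parts.count 1)! *
      ∏ m ∈ (lam.parts.filter (2 ≤ ·)).toFinset, ((lam.parts.filter (2 ≤ ·)).count m)! := by
  have toFinset_eq : lam.parts.toFinset.erase 1 = (lam.parts.filter (2 ≤ ·)).toFinset := by
    ext m
    simp only [mem_erase, Multiset.mem_toFinset, Multiset.mem_filter]
    refine ⟨fun ⟨hm, hmem⟩ => ⟨hmem, ?_⟩,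
      fun ⟨hmem, hm⟩ => ⟨(Nat.lt_of_succ_le hm).ne', hmem⟩⟩
    exact Nat.lt_of_le_of_ne (lam.parts_pos hmem) (Ne.symm hm)
  have count_eq : ∀ m ∈ (lam.parts.filter (2 ≤ ·)).toFinset,
      (lam.parts.count m)! = ((lam.parts.filter (2 ≤ ·)).count m)! := fun m hm => by
    rw [Multiset.count_filter_of_pos (Multiset.mem_filter.1 (Multiset.mem_toFinset.1 hm)).2]
  rw [autCard, ← prod_congr rfl count_eq, ← toFinset_eq]
  by_cases h : 1 ∈ lam.parts
  · exact (mul_prod_erase _ _ (Multiset.mem_toFinset.2 h)).symm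
  · rw [Multiset.count_eq_zero_of_notMem h, erase_eq_of_notMem (by simpa using h),
      Nat.factorial_zero, one_mul]

theorem sum_filter_two_le_add_count_one {n : ℕ} (lam : n.Partition) :
    (lam.parts.filter (2 ≤ ·)).sum + lam.parts.count 1 = n := by
  simpa only [Multiset.sum_add, Multiset.sum_replicate, smul_eq_mul, mul_one, lam.parts_sum] using
    congrArg Multiset.sum (filter_two_le_parts_add_replicate lam)

variable [Fintype V] [DecidableEq V]

theorem parts_partition_eq_iff {n : ℕ} (hn : Fintype.card V = n) {a : Perm V}
    {lam : n.Partition} :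
    a.partition.parts = lam.parts ↔ a.cycleType = lam.parts.filter (2 ≤ ·) := by
  refine ⟨fun h => by rw [← filter_parts_partition_eq_cycleType, h], fun h => ?_⟩
  rw [parts_partition, ← sum_cycleType, h, hn,
    Nat.sub_eq_of_eq_add' (sum_filter_two_le_add_count_one lam).symm,
    filter_two_le_parts_add_replicate]

theorem card_parts_eq_mul {n : ℕ} (hn : Fintype.card V = n) (lam : n.Partition) :
    #{a : Perm V | a.partition.parts = lam.parts} * (lam.parts.prod * autCard lam) = n ! := by
  have hsum := sum_filter_two_le_add_count_one lam
  have prod_eq : lam.parts.prod = (lam.parts.filter (2 ≤ ·)).prod := by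
    conv_lhs => rw [← filter_two_le_parts_add_replicate lam]
    rw [Multiset.prod_add, Multiset.prod_replicate, one_pow, mul_one]
  have hcard := card_of_cycleType_mul_eq V (lam.parts.filter (2 ≤ ·))
  rw [hn, if_pos ⟨by lia, fun m hm => (Multiset.mem_filter.1 hm).2⟩,
    Nat.sub_eq_of_eq_add' hsum.symm] at hcard
  simp only [parts_partition_eq_iff hn, autCard_eq_factorial_mul_prod, prod_eq]
  rw [← hcard]
  ring

end CycleTypeClass

theorem hurwitzN_onePartPartition_eq_sum {n : ℕ} (hn : 1 ≤ n) (b : ℕ) (lam : n.Partition) :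
    hurwitzN n b lam (onePartPartition n hn) =
      ∑ a : Perm (Fin n) with a.partition.parts = lam.parts, walkCount b a := by
  classical
  rw [hurwitzN, Nat.card_eq_fintype_card, Fintype.card_subtype, card_filter,
    Fintype.sum_prod_type, sum_filter]
  refine sum_congr rfl fun a _ => ?_
  rw [walkCount_eq_sum]
  split_ifs with h <;> simp [h, onePartPartition]

end DoubleHurwitz

/-- The genus-one one-part double Hurwitz number:
`N(λ, (n); ℓ+1) / n! = (ℓ+1)! ⋅ n^ℓ ⋅ ((∑ᵢ λᵢ²) − 1) / (24 ⋅ |Aut(λ)|)`. -/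
theorem genus_one_one_part_double_hurwitz (n : ℕ) (hn : 1 ≤ n) (lam : Nat.Partition n) :
    (hurwitzN n (Multiset.card lam.parts + 1) lam (onePartPartition n hn) : ℚ) / n ! =
      ((Multiset.card lam.parts + 1)! : ℚ) * (n : ℚ) ^ Multiset.card lam.parts *
        ((((lam.parts.map fun m => m ^ 2).sum : ℕ) : ℚ) - 1) / (24 * autCard lam) := by
  have : Nonempty (Fin n) := ⟨⟨0, hn⟩⟩
  have walkCount_eq : ∀ a ∈ ({a | a.partition.parts = lam.parts} : Finset (Perm (Fin n))),
      (DoubleHurwitz.walkCount (Multiset.card lam.parts + 1) a : ℚ) =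
        (Multiset.card lam.parts + 1)! * n ^ Multiset.card lam.parts * lam.parts.prod *
          (((lam.parts.map fun m => m ^ 2).sum : ℕ) - 1) / 24 := fun a ha => by
    have parts_eq := (Finset.mem_filter.1 ha).2
    rw [DoubleHurwitz.walkCount_cycleCount_add_one (congrArg Multiset.card parts_eq),
      DoubleHurwitz.cycleProd, DoubleHurwitz.cycleSqSum, parts_eq, Fintype.card_fin]
  have class_card := DoubleHurwitz.card_parts_eq_mul (Fintype.card_fin n) lam
  have factorial_pos := n.factorial_pos
  have autCard_pos : 0 < autCard lam :=
    Nat.pos_of_mul_pos_left (Nat.pos_of_mul_pos_left (class_card ▸ factorial_pos))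
  rw [DoubleHurwitz.hurwitzN_onePartPartition_eq_sum, Nat.cast_sum,
    Finset.sum_congr rfl walkCount_eq, Finset.sum_const, nsmul_eq_mul,
    div_eq_div_iff (by positivity) (by positivity), ← class_card]
  push_cast
  ring
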